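/- Let G be a finite simple graph and let e = {u,v} be an edge of G. Then the augmented Forman–Ricci curvature taking into account all 3-cycles satisfies AF_3(e) = 4 − deg(u) − deg(v) + 3·t(e), where t(e) = |N(u) ∩ N(v)| is the number of triangles of G containing e; equivalently, AF_3(e) = F(e) + 3·#{3-cycles of G containing e}. -/

import Mathlib

/-!
For distinct edges `e, e'` exactly one of `Γ e e'`, `Γ e' e` counts the triangles in which the two
edges are aligned, and the other one counts the triangles containing both in which they are not.
Hence `Γ e e' + Γ e' e` is the number of triangles containing both edges
(`Gamma_add_Gamma`); no property of alignment is used beyond its symmetry and the fact that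
aligned edges lie on the cycle.

The triangles through `s(u, v)` are the sets `tri u v w` with `w` a common neighbour of `u` and `v`
(`mem_triangleCycles_and_mem`), so `Γ e e = t(e)`. Two edges of a triangle share a vertex, so the
non-adjacent edges contribute nothing. An adjacent edge `s(u, w)` lies in a triangle with `s(u, v)`
exactly when `w` is adjacent to `v`, and then in only one; its term `|Γ e e' + Γ e' e - 1|` is thus
`0` for a common neighbour `w` and `1` otherwise. The adjacent edges at `u` therefore contribute
`deg u - 1 - t(e)`, those at `v` contribute `deg v - 1 - t(e)`, and
`AF₃ e = 2 + t - (deg u - 1 - t) - (deg v - 1 - t) = 4 - deg u - deg v + 3 t`.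
-/

open scoped Classical

open SimpleGraph Finset

variable {V : Type*}

/-- The walk `w` traverses the ordered pair of vertices `(a, b)` as one of its steps. -/
def TraversesPair {G : SimpleGraph V} {x y : V} (w : G.Walk x y) (a b : V) : Prop :=
  (a, b) ∈ w.darts.map SimpleGraph.Dart.toProd

/-- The edge `e` is traversed by `w` from its smaller to its larger endpoint,
with respect to the linear order `o` on the vertices. -/
def TraversedUp (o : LinearOrder V) {G : SimpleGraph V} {x y : V} (w : G.Walk x y)
    (e : Sym2 V) : Prop :=
  ∃ a b : V, o.lt a b ∧ e = s(a, b) ∧ TraversesPair w a b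

/-- The edge `e` is traversed by `w` from its larger to its smaller endpoint,
with respect to the linear order `o` on the vertices. -/
def TraversedDown (o : LinearOrder V) {G : SimpleGraph V} {x y : V} (w : G.Walk x y)
    (e : Sym2 V) : Prop :=
  ∃ a b : V, o.lt a b ∧ e = s(a, b) ∧ TraversesPair w b a

/-- Two edges are aligned in the (oriented) closed walk `w` if both are traversed from
smaller to larger endpoint, or both from larger to smaller endpoint. -/
def AlignedIn (o : LinearOrder V) {G : SimpleGraph V} {x y : V} (w : G.Walk x y)
    (e e' : Sym2 V) : Prop :=
  (TraversedUp o w e ∧ TraversedUp o w e') ∨ (TraversedDown o w e ∧ TraversedDown o w e')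

/-- `γ` is the edge set of a simple cycle of `G`.  A simple cycle, identified up to rotation
and reflection, is determined by its edge set. -/
def IsCycleEdgeSet [DecidableEq V] (G : SimpleGraph V) (γ : Finset (Sym2 V)) : Prop :=
  ∃ (x : V) (w : G.Walk x x), w.IsCycle ∧ w.edges.toFinset = γ

/-- Edges `e` and `e'` are aligned in the simple cycle with edge set `γ`, i.e. aligned with
respect to some (equivalently, any) cyclic orientation of that cycle. -/
def AlignedInCycle (o : LinearOrder V) [DecidableEq V] (G : SimpleGraph V)
    (γ : Finset (Sym2 V)) (e e' : Sym2 V) : Prop :=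
  ∃ (x : V) (w : G.Walk x x), w.IsCycle ∧ w.edges.toFinset = γ ∧ AlignedIn o w e e'

/-- The smaller endpoint of an edge, with respect to the linear order `o`. -/
def emin (o : LinearOrder V) (e : Sym2 V) : V :=
  letI := o
  Sym2.lift ⟨fun a b => min a b, fun a b => min_comm a b⟩ e

/-- The larger endpoint of an edge, with respect to the linear order `o`. -/
def emax (o : LinearOrder V) (e : Sym2 V) : V :=
  letI := o
  Sym2.lift ⟨fun a b => max a b, fun a b => max_comm a b⟩ e

/-- The lexicographic order on edges induced by the linear order `o` on vertices. -/
def edgeLT (o : LinearOrder V) (e e' : Sym2 V) : Prop :=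
  o.lt (emin o e) (emin o e') ∨ (emin o e = emin o e' ∧ o.lt (emax o e) (emax o e'))

/-- The cycle-count matrix `Γ` associated with a set `C` of simple cycles (given by their edge
sets): `Γ e e` is the number of cycles in `C` containing `e`; for `e ≠ e'`, `Γ e e'` is the
number of cycles of `C` in which `e, e'` are aligned if `e < e'`, and the number of cycles of
`C` containing both in which they are not aligned if `e > e'`. -/
noncomputable def Gamma (o : LinearOrder V) [DecidableEq V] (G : SimpleGraph V)
    (C : Finset (Finset (Sym2 V))) (e e' : Sym2 V) : ℕ :=
  if e = e' then {γ ∈ (C : Set (Finset (Sym2 V))) | e ∈ γ}.ncard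
  else if edgeLT o e e' then
    {γ ∈ (C : Set (Finset (Sym2 V))) | AlignedInCycle o G γ e e'}.ncard
  else
    {γ ∈ (C : Set (Finset (Sym2 V))) | e ∈ γ ∧ e' ∈ γ ∧ ¬ AlignedInCycle o G γ e e'}.ncard

/-- Two edges share a vertex. -/
def ShareVertex (e e' : Sym2 V) : Prop :=
  ∃ v, v ∈ e ∧ v ∈ e'

/-- The augmented Forman–Ricci curvature of the edge `e` with respect to the set `C` of
simple cycles (given by their edge sets), and the linear order `o` on the vertices. -/
noncomputable def AF (o : LinearOrder V) [Fintype V] [DecidableEq V] (G : SimpleGraph V)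
    (C : Finset (Finset (Sym2 V))) (e : Sym2 V) : ℤ :=
  2 + (Gamma o G C e e : ℤ)
    - ∑ e' ∈ G.edgeFinset.filter (fun e' => e' ≠ e ∧ ShareVertex e e'),
        |(Gamma o G C e e' : ℤ) + (Gamma o G C e' e : ℤ) - 1|
    - ∑ e' ∈ G.edgeFinset.filter (fun e' => e' ≠ e ∧ ¬ ShareVertex e e'),
        |(Gamma o G C e e' : ℤ) - (Gamma o G C e' e : ℤ)|

/-- The set of all `3`-cycles (triangles) of `G`, given by their edge sets. -/
noncomputable def triangleCycles [Fintype V] [DecidableEq V] (G : SimpleGraph V) :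
    Finset (Finset (Sym2 V)) :=
  Set.toFinset {γ : Finset (Sym2 V) | IsCycleEdgeSet G γ ∧ γ.card = 3}

/-! ### Triangles through an edge -/

/-- The edge set of the triangle with vertices `a`, `b`, `c`. -/
def tri [DecidableEq V] (a b c : V) : Finset (Sym2 V) := {s(a, b), s(a, c), s(b, c)}

theorem mem_triangleCycles [Fintype V] [DecidableEq V] (G : SimpleGraph V)
    (γ : Finset (Sym2 V)) :
    γ ∈ triangleCycles G ↔
      ∃ a b c, G.Adj a b ∧ G.Adj a c ∧ G.Adj b c ∧ γ = tri a b c := by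
  simp only [triangleCycles, Set.mem_toFinset, Set.mem_ofPred_eq]
  constructor
  · rintro ⟨⟨x, w, hw, rfl⟩, hc⟩
    rw [List.toFinset_card_of_nodup hw.edges_nodup, Walk.length_edges] at hc
    match w, hc with
    | .cons (v := b) h1 (.cons (v := c) h2 (.cons h3 .nil)), _ =>
      refine ⟨x, b, c, h1, h3.symm, h2, ?_⟩
      ext e
      simp only [Walk.edges_cons, Walk.edges_nil, List.mem_toFinset, List.mem_cons,
        List.not_mem_nil, or_false, tri, Finset.mem_insert, Finset.mem_singleton,
        Sym2.eq_swap (a := c) (b := x)]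
      tauto
  · rintro ⟨a, b, c, hab, hac, hbc, rfl⟩
    have h1 := hab.ne
    have h2 := hac.ne
    have h3 := hbc.ne
    refine ⟨⟨a, .cons hab (.cons hbc (.cons hac.symm .nil)), ?_, ?_⟩, ?_⟩
    · simp [Walk.cons_isCycle_iff, h1, h2, h3, h1.symm, h2.symm]
    · ext e
      simp only [Walk.edges_cons, Walk.edges_nil, List.mem_toFinset, List.mem_cons,
        List.not_mem_nil, or_false, tri, Finset.mem_insert, Finset.mem_singleton,
        Sym2.eq_swap (a := c) (b := a)]
      tauto
    · refine Finset.card_eq_three.2 ⟨_, _, _, ?_, ?_, ?_, rfl⟩ <;>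
        simp [h1, h2, h3, h1.symm, h3.symm]

theorem mem_triangleCycles_and_mem [Fintype V] [DecidableEq V] (G : SimpleGraph V) {u v : V}
    (γ : Finset (Sym2 V)) :
    (γ ∈ triangleCycles G ∧ s(u, v) ∈ γ) ↔
      ∃ w, G.Adj u v ∧ G.Adj u w ∧ G.Adj v w ∧ γ = tri u v w := by
  rw [mem_triangleCycles]
  constructor
  · rintro ⟨⟨a, b, c, hab, hac, hbc, rfl⟩, he⟩
    simp only [tri, Finset.mem_insert, Finset.mem_singleton, Sym2.eq_iff] at he
    rcases he with (⟨rfl, rfl⟩ | ⟨rfl, rfl⟩) | (⟨rfl, rfl⟩ | ⟨rfl, rfl⟩) |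
      (⟨rfl, rfl⟩ | ⟨rfl, rfl⟩)
    · exact ⟨c, hab, hac, hbc, rfl⟩
    · exact ⟨c, hab.symm, hbc, hac, by ext; simp [tri, Sym2.eq_swap]; tauto⟩
    · exact ⟨b, hac, hab, hbc.symm, by ext; simp [tri, Sym2.eq_swap]; tauto⟩
    · exact ⟨b, hac.symm, hbc.symm, hab, by ext; simp [tri, Sym2.eq_swap]; tauto⟩
    · exact ⟨a, hbc, hab.symm, hac.symm, by ext; simp [tri, Sym2.eq_swap]; tauto⟩
    · exact ⟨a, hbc.symm, hac.symm, hab.symm, by ext; simp [tri, Sym2.eq_swap]; tauto⟩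
  · rintro ⟨w, h1, h2, h3, rfl⟩
    exact ⟨⟨u, v, w, h1, h2, h3, rfl⟩, by simp [tri]⟩

theorem mem_tri_left_iff [DecidableEq V] {u v w x : V} (huv : u ≠ v) (huw : u ≠ w)
    (hxv : x ≠ v) : s(u, x) ∈ tri u v w ↔ x = w := by
  simp only [tri, Finset.mem_insert, Finset.mem_singleton, Sym2.eq_iff]
  grind

theorem Gamma_self [Fintype V] [DecidableEq V] (o : LinearOrder V) (G : SimpleGraph V) {u v : V}
    (huv : G.Adj u v) :
    Gamma o G (triangleCycles G) s(u, v) s(u, v)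
      = (G.neighborFinset u ∩ G.neighborFinset v).card := by
  rw [Gamma, if_pos rfl]
  have h : {γ ∈ (triangleCycles G : Set (Finset (Sym2 V))) | s(u, v) ∈ γ}
      = (tri u v) '' ((G.neighborFinset u ∩ G.neighborFinset v : Finset V) : Set V) := by
    ext γ
    simp only [Set.mem_ofPred_eq, Finset.mem_coe, mem_triangleCycles_and_mem, Set.mem_image,
      Finset.mem_inter, mem_neighborFinset, huv, true_and]
    grind
  rw [h, Set.InjOn.ncard_image, Set.ncard_coe_finset]
  intro w hw w' hw' hww
  simp only [Finset.coe_inter, coe_neighborFinset, Set.mem_inter_iff, mem_neighborSet] at hw hw'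
  refine (mem_tri_left_iff huv.ne hw'.1.ne hw.2.ne').1 ?_
  rw [← hww]
  simp [tri]

/-! ### The sum of the two off-diagonal counts -/

theorem edgeLT_asymm (o : LinearOrder V) {e e' : Sym2 V} (h : edgeLT o e e') :
    ¬ edgeLT o e' e := by
  let := o
  rintro h'
  change emin o e < emin o e' ∨ _ = _ ∧ emax o e < emax o e' at h
  change emin o e' < emin o e ∨ _ = _ ∧ emax o e' < emax o e at h'
  rcases h with h | ⟨h, h2⟩ <;> rcases h' with h' | ⟨h', h2'⟩
  · exact lt_asymm h h'
  · exact h.ne h'.symm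
  · exact h'.ne h.symm
  · exact lt_asymm h2 h2'

theorem mk_emin_emax (o : LinearOrder V) (e : Sym2 V) : s(emin o e, emax o e) = e := by
  let := o
  induction e with | _ a b => ?_
  change s(min a b, max a b) = s(a, b)
  rcases le_total a b with h | h
  · simp [h]
  · simp [h, Sym2.eq_swap]

theorem edgeLT_total (o : LinearOrder V) {e e' : Sym2 V} (hne : e ≠ e') :
    edgeLT o e e' ∨ edgeLT o e' e := by
  let := o
  change (emin o e < emin o e' ∨ _ = _ ∧ emax o e < emax o e') ∨
    (emin o e' < emin o e ∨ _ = _ ∧ emax o e' < emax o e)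
  rcases lt_trichotomy (emin o e) (emin o e') with h | h | h
  · tauto
  · rcases lt_trichotomy (emax o e) (emax o e') with h2 | h2 | h2
    · tauto
    · exact absurd (by rw [← mk_emin_emax o e, ← mk_emin_emax o e', h, h2]) hne
    · exact Or.inr (Or.inr ⟨h.symm, h2⟩)
  · tauto

theorem AlignedInCycle.symm {o : LinearOrder V} [DecidableEq V] {G : SimpleGraph V}
    {γ : Finset (Sym2 V)} {e e' : Sym2 V} (h : AlignedInCycle o G γ e e') :
    AlignedInCycle o G γ e' e := by
  obtain ⟨x, w, hw, hγ, h | h⟩ := h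
  · exact ⟨x, w, hw, hγ, Or.inl h.symm⟩
  · exact ⟨x, w, hw, hγ, Or.inr h.symm⟩

theorem AlignedInCycle.mem_left {o : LinearOrder V} [DecidableEq V] {G : SimpleGraph V}
    {γ : Finset (Sym2 V)} {e e' : Sym2 V} (h : AlignedInCycle o G γ e e') : e ∈ γ := by
  have key : ∀ {x : V} (w : G.Walk x x) (a b : V), TraversesPair w a b → s(a, b) ∈ w.edges := by
    intro x w a b h
    obtain ⟨d, hd, hab⟩ := List.mem_map.1 h
    exact List.mem_map.2 ⟨d, hd, by rw [Dart.edge, hab]⟩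
  obtain ⟨x, w, -, rfl, ⟨⟨a, b, -, rfl, h⟩, -⟩ | ⟨⟨a, b, -, rfl, h⟩, -⟩⟩ := h
  · exact List.mem_toFinset.2 (key w a b h)
  · rw [Sym2.eq_swap]
    exact List.mem_toFinset.2 (key w b a h)

/-- `Γ e e' + Γ e' e` is the number of cycles of `C` through both edges: one summand counts the
cycles in which they are aligned, the other one those in which they are not. -/
theorem Gamma_add_Gamma [DecidableEq V] (o : LinearOrder V) (G : SimpleGraph V)
    (C : Finset (Finset (Sym2 V))) {e e' : Sym2 V} (hne : e ≠ e') :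
    Gamma o G C e e' + Gamma o G C e' e
      = {γ ∈ (C : Set (Finset (Sym2 V))) | e ∈ γ ∧ e' ∈ γ}.ncard := by
  wlog hlt : edgeLT o e e' generalizing e e'
  · rw [add_comm, this hne.symm ((edgeLT_total o hne).resolve_left hlt)]
    simp only [and_comm (a := e' ∈ _)]
  rw [Gamma, if_neg hne, if_pos hlt, Gamma, if_neg hne.symm, if_neg (edgeLT_asymm o hlt),
    ← Set.ncard_union_eq]
  · congr 1
    ext γ
    have h1 : AlignedInCycle o G γ e e' → e ∈ γ := fun h => h.mem_left
    have h2 : AlignedInCycle o G γ e e' → e' ∈ γ := fun h => h.symm.mem_left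
    have h3 : AlignedInCycle o G γ e e' ↔ AlignedInCycle o G γ e' e := ⟨.symm, .symm⟩
    simp only [Set.mem_union, Set.mem_ofPred_eq]
    tauto
  · rw [Set.disjoint_left]
    rintro γ ⟨-, h⟩ ⟨-, -, -, h'⟩
    exact h' h.symm

/-! ### Counts for triangles -/

theorem Gamma_add_Gamma_adjacent [Fintype V] [DecidableEq V] (o : LinearOrder V)
    (G : SimpleGraph V) {u v w : V} (huv : G.Adj u v) (huw : G.Adj u w) (hwv : w ≠ v) :
    Gamma o G (triangleCycles G) s(u, v) s(u, w) + Gamma o G (triangleCycles G) s(u, w) s(u, v)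
      = if G.Adj v w then 1 else 0 := by
  rw [Gamma_add_Gamma o G _ (by simpa [Sym2.eq_iff, huv.ne, huw.ne] using hwv.symm)]
  have h : ∀ γ, (γ ∈ triangleCycles G ∧ s(u, v) ∈ γ ∧ s(u, w) ∈ γ) ↔
      G.Adj v w ∧ γ = tri u v w := by
    intro γ
    rw [← and_assoc, mem_triangleCycles_and_mem]
    constructor
    · rintro ⟨⟨x, -, hux, hvx, rfl⟩, hm⟩
      obtain rfl := (mem_tri_left_iff huv.ne hux.ne hwv).1 hm
      exact ⟨hvx, rfl⟩
    · rintro ⟨hvw, rfl⟩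
      exact ⟨⟨w, huv, huw, hvw, rfl⟩, by simp [tri]⟩
  simp only [Finset.mem_coe, h]
  split_ifs with hvw <;> simp [hvw]

theorem Gamma_add_Gamma_of_not_shareVertex [Fintype V] [DecidableEq V] (o : LinearOrder V)
    (G : SimpleGraph V) {e e' : Sym2 V} (hne : e ≠ e') (hs : ¬ ShareVertex e e') :
    Gamma o G (triangleCycles G) e e' + Gamma o G (triangleCycles G) e' e = 0 := by
  rw [Gamma_add_Gamma o G _ hne]
  convert Set.ncard_empty (Finset (Sym2 V))
  rw [Set.eq_empty_iff_forall_notMem]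
  rintro γ ⟨hγ, he, he'⟩
  obtain ⟨a, b, c, -, -, -, rfl⟩ := (mem_triangleCycles G γ).1 hγ
  apply hs
  simp only [tri, Finset.mem_insert, Finset.mem_singleton] at he he'
  rcases he with rfl | rfl | rfl <;> rcases he' with rfl | rfl | rfl <;>
    simp [ShareVertex]

/-! ### Evaluation of the curvature -/

/-- The edges `s(u, w)` with `w ≠ v` contribute `deg u - 1 - t(s(u, v))` to the sum over the
edges adjacent to `s(u, v)`. -/
theorem sum_side [Fintype V] [DecidableEq V] (o : LinearOrder V)
    (G : SimpleGraph V) {u v : V} (huv : G.Adj u v) :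
    ∑ w ∈ (G.neighborFinset u).erase v,
        |(Gamma o G (triangleCycles G) s(u, v) s(u, w) : ℤ)
          + (Gamma o G (triangleCycles G) s(u, w) s(u, v) : ℤ) - 1|
      = (G.degree u : ℤ) - 1 - ((G.neighborFinset u ∩ G.neighborFinset v).card : ℤ) := by
  have h1 : ∀ w ∈ (G.neighborFinset u).erase v,
        |(Gamma o G (triangleCycles G) s(u, v) s(u, w) : ℤ)
          + (Gamma o G (triangleCycles G) s(u, w) s(u, v) : ℤ) - 1|
        = 1 - if G.Adj v w then 1 else 0 := by
    intro w hw
    rw [Finset.mem_erase, mem_neighborFinset] at hw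
    have := Gamma_add_Gamma_adjacent o G huv hw.2 hw.1
    rw [← Nat.cast_add, this]
    split_ifs <;> simp
  rw [Finset.sum_congr rfl h1, Finset.sum_sub_distrib, Finset.sum_const, Finset.sum_boole,
    Finset.card_erase_of_mem (by simpa using huv), card_neighborFinset_eq_degree]
  have h2 : ((G.neighborFinset u).erase v).filter (fun w => G.Adj v w)
      = G.neighborFinset u ∩ G.neighborFinset v := by
    ext w
    simp only [Finset.mem_filter, Finset.mem_erase, mem_neighborFinset, Finset.mem_inter]
    exact ⟨fun h => ⟨h.1.2, h.2⟩, fun h => ⟨⟨h.2.ne', h.1⟩, h.2⟩⟩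
  have h3 : 0 < G.degree u := (G.degree_pos_iff_exists_adj u).2 ⟨v, huv⟩
  rw [h2, nsmul_eq_mul, mul_one, Nat.cast_pred h3]

/-- The edges adjacent to `s(u, v)` are the other edges at `u` and the other edges at `v`. -/
theorem adjacent_edges_eq [Fintype V] [DecidableEq V] (G : SimpleGraph V) {u v : V}
    (huv : G.Adj u v) :
    G.edgeFinset.filter (fun e' => e' ≠ s(u, v) ∧ ShareVertex s(u, v) e')
      = ((G.neighborFinset u).erase v).image (fun w => s(u, w))
        ∪ ((G.neighborFinset v).erase u).image (fun w => s(v, w)) := by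
  ext e
  simp only [Finset.mem_filter, mem_edgeFinset, Finset.mem_union, Finset.mem_image,
    Finset.mem_erase, mem_neighborFinset]
  constructor
  · rintro ⟨he, hne, x, hx, hxe⟩
    obtain ⟨y, rfl⟩ := hxe
    rcases Sym2.mem_iff.1 hx with rfl | rfl
    · exact Or.inl ⟨y, ⟨fun h => hne (by rw [h]), he⟩, rfl⟩
    · exact Or.inr ⟨y, ⟨fun h => hne (by rw [h, Sym2.eq_swap]), he⟩, rfl⟩
  · rintro (⟨w, ⟨hw, h⟩, rfl⟩ | ⟨w, ⟨hw, h⟩, rfl⟩)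
    · exact ⟨h, by simpa [Sym2.eq_iff, huv.ne, h.ne] using hw, u, by simp, by simp⟩
    · exact ⟨h, by simpa [Sym2.eq_iff, huv.ne', h.ne] using hw, v, by simp, by simp⟩

theorem AF_three_eq [Fintype V] [DecidableEq V] (o : LinearOrder V)
    (G : SimpleGraph V) {u v : V} (huv : G.Adj u v) :
    AF o G (triangleCycles G) s(u, v)
      = 4 - (G.degree u : ℤ) - (G.degree v : ℤ)
        + 3 * ((G.neighborFinset u ∩ G.neighborFinset v).card : ℤ) := by
  have hzero : ∑ e' ∈ G.edgeFinset.filter (fun e' => e' ≠ s(u, v) ∧ ¬ ShareVertex s(u, v) e'),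
      |(Gamma o G (triangleCycles G) s(u, v) e' : ℤ)
        - (Gamma o G (triangleCycles G) e' s(u, v) : ℤ)| = 0 := by
    refine Finset.sum_eq_zero fun e' he' => ?_
    have h := (Finset.mem_filter.1 he').2
    have := Gamma_add_Gamma_of_not_shareVertex o G h.1.symm h.2
    rw [(Nat.add_eq_zero_iff.1 this).1, (Nat.add_eq_zero_iff.1 this).2]
    simp
  have hdisj : Disjoint (((G.neighborFinset u).erase v).image (fun w => s(u, w)))
      (((G.neighborFinset v).erase u).image (fun w => s(v, w))) := by
    rw [Finset.disjoint_left]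
    intro e h1 h2
    simp only [Finset.mem_image, Finset.mem_erase, mem_neighborFinset] at h1 h2
    obtain ⟨w, ⟨hw, -⟩, rfl⟩ := h1
    obtain ⟨x, ⟨hx, -⟩, h⟩ := h2
    rcases Sym2.eq_iff.1 h with ⟨h, -⟩ | ⟨h, -⟩
    · exact huv.ne' h
    · exact hw h.symm
  have hu := sum_side o G huv
  have hv := sum_side o G huv.symm
  rw [Sym2.eq_swap (a := v) (b := u), Finset.inter_comm] at hv
  rw [AF, hzero, adjacent_edges_eq G huv, Finset.sum_union hdisj,
    Finset.sum_image (fun a _ b _ h => Sym2.congr_right.1 h),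
    Finset.sum_image (fun a _ b _ h => Sym2.congr_right.1 h), hu, hv, Gamma_self o G huv]
  ring

/-- Let `G` be a finite simple graph and `e = {u, v}` an edge of `G`.  Then
the augmented Forman–Ricci curvature taking into account all `3`-cycles satisfies
`AF₃ e = 4 - deg u - deg v + 3 ⬝ #(N(u) ∩ N(v))`, where `#(N(u) ∩ N(v))` is the number of
triangles of `G` containing `e`; equivalently,
`AF₃ e = F e + 3 ⬝ #{3-cycles of G containing e}`. -/
theorem stmt7 {V : Type*} [Fintype V] [DecidableEq V] (o : LinearOrder V)
    (G : SimpleGraph V) {u v : V} (huv : G.Adj u v) :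
    AF o G (triangleCycles G) s(u, v)
      = 4 - (G.degree u : ℤ) - (G.degree v : ℤ)
        + 3 * ((G.neighborFinset u ∩ G.neighborFinset v).card : ℤ) ∧
    AF o G (triangleCycles G) s(u, v)
      = 4 - (G.degree u : ℤ) - (G.degree v : ℤ)
        + 3 * (Gamma o G (triangleCycles G) s(u, v) s(u, v) : ℤ) := by
  refine ⟨AF_three_eq o G huv, ?_⟩
  rw [Gamma_self o G huv]
  exact AF_three_eq o G huv
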